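/- arXiv:1805.04466 — 2 statements merged into one kernel-verified Lean document; each statement's English description precedes it below -/
import Mathlib

section
/- Let N ≥ 1 be an integer, α > 0, T > 0, and let u₀ : ℝ^N → [0,∞) be measurable. If there exists a nonnegative integral solution of u_t = Δu + u^{α+1} on (0,T) × ℝ^N with initial value u₀, then for every t ∈ (0,T) one has (αt)^{1/α} · ess sup_{x ∈ ℝ^N} ∫_{ℝ^N} G(t,x,y) u₀(y) dy ≤ 1. -/
open MeasureTheory Real Set Filter ENNReal

/-- The Gaussian heat kernel `G(t,x,y) = (4πt)^{-N/2} exp(-|x-y|²/(4t))` on `ℝ^N`. -/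
noncomputable def heatKernel (N : ℕ) (t : ℝ) (x y : EuclideanSpace ℝ (Fin N)) : ℝ :=
  (4 * π * t) ^ (-(N : ℝ) / 2) * Real.exp (-‖x - y‖ ^ 2 / (4 * t))

/-!
Suppose `v` dominates its own Duhamel formula. Fix a time `τ` and a point `x`, and put
`A = (e^{τΔ} v₀) x` and `m t = (e^{(τ-t)Δ} v(t)) x`. Applying `e^{(τ-t)Δ}` to the inequality
satisfied by `v(t)`, and using the semigroup law and then Jensen's inequality, gives
`m t ≥ A + ∫₀ᵗ m(s)^(α+1) ds`. Solutions of `M' ≥ M^(α+1)` that start from `A` blow up by the time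
`A^(-α) / α`, whereas `A + ∫₀^τ m(s)^(α+1) ds ≤ v(τ, x) < ∞`; hence `α τ ≤ A^(-α)`. This holds for
almost every `τ` and `x` only. As the heat semigroup contracts the supremum norm, the bound at time
`τ` is inherited by every point at every later time `t`, and `τ ↑ t` concludes.

The argument lives on an arbitrary sub-Markov semigroup. The heat kernel is an instance: completing
the square writes the product of two Gaussians as a Gaussian in `x - z` times a Gaussian in the
intermediate point `y`, and integrating the latter gives the semigroup law.
-/

section BlowUp

variable {α a b : ℝ}

lemma mul_sub_le_rpow_neg_sub_rpow_neg_of_rpow_le_deriv (hα : 0 ≤ α) (hab : a ≤ b) {K K' : ℝ → ℝ}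
    (hKc : ContinuousOn K (Icc a b)) (hK : ∀ t ∈ Ioo a b, HasDerivAt K (K' t) t)
    (hpos : ∀ t ∈ Icc a b, 0 < K t) (hle : ∀ t ∈ Ioo a b, K t ^ (α + 1) ≤ K' t) :
    α * (b - a) ≤ K a ^ (-α) - K b ^ (-α) := by
  have hderiv : ∀ t ∈ Ioo a b,
      HasDerivAt (fun t => K t ^ (-α)) (K' t * -α * K t ^ (-α - 1)) t := fun t ht =>
    (hK t ht).rpow_const (Or.inl (hpos t (Ioo_subset_Icc_self ht)).ne')
  have hderiv_le : ∀ t ∈ Ioo a b, K' t * -α * K t ^ (-α - 1) ≤ -α := by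
    intro t ht
    have hKt := hpos t (Ioo_subset_Icc_self ht)
    have hone : 1 ≤ K' t * K t ^ (-α - 1) :=
      calc 1 = K t ^ (α + 1) * K t ^ (-α - 1) := by
            rw [← Real.rpow_add hKt, show α + 1 + (-α - 1) = 0 by ring, Real.rpow_zero]
        _ ≤ K' t * K t ^ (-α - 1) := by gcongr; exact hle t ht
    nlinarith
  have hsub := (convex_Icc a b).image_sub_le_mul_sub_of_deriv_le (f := fun t => K t ^ (-α))
    (C := -α) (hKc.rpow_const fun t ht => Or.inl (hpos t ht).ne')
    (fun t ht => by
      rw [interior_Icc] at ht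
      exact (hderiv t ht).differentiableAt.differentiableWithinAt)
    (fun t ht => by
      rw [interior_Icc] at ht
      exact (hderiv t ht).deriv.trans_le (hderiv_le t ht))
    a (left_mem_Icc.2 hab) b (right_mem_Icc.2 hab) hab
  linarith

lemma hasDerivAt_integral_of_continuousOn_Icc {f : ℝ → ℝ} (hf : ContinuousOn f (Icc a b)) {t : ℝ}
    (ht : t ∈ Ioo a b) : HasDerivAt (fun t => ∫ s in a..t, f s) (f t) t :=
  intervalIntegral.integral_hasDerivAt_right
    ((hf.mono (Icc_subset_Icc_right ht.2.le)).intervalIntegrable_of_Icc ht.1.le)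
    ((hf.mono Ioo_subset_Icc_self).stronglyMeasurableAtFilter isOpen_Ioo t ht)
    (hf.continuousAt (Icc_mem_nhds ht.1 ht.2))

-- `g` is merely integrable, so `H = A + ∫ g` need not be differentiable; the comparison is run on
-- the `C¹` function `K = A + ∫ H ^ (α + 1)`, which satisfies `K ≤ H` and hence `K ^ (α + 1) ≤ K'`.
lemma mul_sub_le_rpow_neg_of_ae_rpow_add_integral_le {A : ℝ} (hα : 0 ≤ α) (hA : 0 < A)
    (hab : a ≤ b) {g : ℝ → ℝ} (hg : IntervalIntegrable g volume a b) (hg0 : ∀ t, 0 ≤ g t)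
    (hle : ∀ᵐ t ∂volume.restrict (Ioo a b), (A + ∫ s in a..t, g s) ^ (α + 1) ≤ g t) :
    α * (b - a) ≤ A ^ (-α) := by
  set H : ℝ → ℝ := fun t => A + ∫ s in a..t, g s
  have hHc : ContinuousOn (fun t => H t ^ (α + 1)) (Icc a b) := by
    refine ContinuousOn.rpow_const (continuousOn_const.add ?_) fun _ _ => Or.inr (by linarith)
    rw [← uIcc_of_le hab]
    exact intervalIntegral.continuousOn_primitive_interval' hg left_mem_uIcc
  have hHnonneg : ∀ t, a ≤ t → 0 ≤ H t := fun t ht =>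
    add_nonneg hA.le (intervalIntegral.integral_nonneg ht fun s _ => hg0 s)
  set K : ℝ → ℝ := fun t => A + ∫ s in a..t, H s ^ (α + 1) with hK
  have hKc : ContinuousOn K (Icc a b) := by
    refine continuousOn_const.add ?_
    rw [← uIcc_of_le hab]
    exact intervalIntegral.continuousOn_primitive_interval'
      (hHc.intervalIntegrable_of_Icc hab) left_mem_uIcc
  have hKpos : ∀ t ∈ Icc a b, 0 < K t := fun t ht =>
    add_pos_of_pos_of_nonneg hA (intervalIntegral.integral_nonneg ht.1 fun s hs =>
      Real.rpow_nonneg (hHnonneg s hs.1) _)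
  have hKH : ∀ t ∈ Ioo a b, K t ≤ H t := fun t ht => by
    have hsub : Icc a t ⊆ Icc a b := Icc_subset_Icc_right ht.2.le
    refine add_le_add_right (intervalIntegral.integral_mono_ae_restrict ht.1.le
      ((hHc.mono hsub).intervalIntegrable_of_Icc ht.1.le)
      (hg.mono_set (by rwa [uIcc_of_le hab, uIcc_of_le ht.1.le])) ?_) A
    rw [← restrict_Ioo_eq_restrict_Icc]
    exact ae_restrict_of_ae_restrict_of_subset (Ioo_subset_Ioo_right ht.2.le) hle
  have hcompare := mul_sub_le_rpow_neg_sub_rpow_neg_of_rpow_le_deriv hα hab hKc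
    (fun t ht => (hasDerivAt_integral_of_continuousOn_Icc hHc ht).const_add A) hKpos
    fun t ht => Real.rpow_le_rpow (hKpos t (Ioo_subset_Icc_self ht)).le (hKH t ht) (by linarith)
  have hKa : K a = A := by simp [hK]
  have hKb : 0 < K b ^ (-α) := Real.rpow_pos_of_pos (hKpos b (right_mem_Icc.2 hab)) _
  rw [hKa] at hcompare
  linarith

lemma integral_toReal_eq_toReal_setLIntegral_Ioo (hab : a ≤ b) {w : ℝ → ℝ≥0∞}
    (hw : AEMeasurable w (volume.restrict (Ioo a b))) (hfin : ∫⁻ s in Ioo a b, w s ≠ ∞) :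
    ∫ s in a..b, (w s).toReal = (∫⁻ s in Ioo a b, w s).toReal := by
  rw [intervalIntegral.integral_of_le hab, integral_Ioc_eq_integral_Ioo,
    integral_toReal hw (ae_lt_top' hw hfin)]

lemma le_inv_ofReal_rpow_of_le_toReal_rpow_neg {c : ℝ} {A : ℝ≥0∞} (hα : 0 < α) (hc : 0 < c)
    (hA0 : A ≠ 0) (hA : A ≠ ∞) (hle : c ≤ A.toReal ^ (-α)) :
    A ≤ (ENNReal.ofReal (c ^ (1 / α)))⁻¹ := by
  have hApos : 0 < A.toReal := ENNReal.toReal_pos hA0 hA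
  rw [← ENNReal.ofReal_inv_of_pos (by positivity),
    ENNReal.le_ofReal_iff_toReal_le hA (by positivity)]
  calc A.toReal = ((A.toReal ^ (-α)) ^ (1 / α))⁻¹ := by
        rw [← Real.rpow_mul hApos.le, ← Real.rpow_neg hApos.le,
          show -(-α * (1 / α)) = 1 by field_simp, Real.rpow_one]
    _ ≤ (c ^ (1 / α))⁻¹ := by gcongr

lemma le_inv_ofReal_rpow_of_ae_rpow_add_lintegral_le {A : ℝ≥0∞} (hα : 0 < α) (hab : a < b)
    {w : ℝ → ℝ≥0∞} (hw : AEMeasurable w (volume.restrict (Ioo a b)))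
    (hfin : A + ∫⁻ s in Ioo a b, w s ≠ ∞)
    (hle : ∀ᵐ t ∂volume.restrict (Ioo a b), (A + ∫⁻ s in Ioo a t, w s) ^ (α + 1) ≤ w t) :
    A ≤ (ENNReal.ofReal ((α * (b - a)) ^ (1 / α)))⁻¹ := by
  obtain ⟨hA, hwfin⟩ := ENNReal.add_ne_top.1 hfin
  rcases eq_or_ne A 0 with rfl | hA0
  · exact zero_le
  have hint : IntervalIntegrable (fun t => (w t).toReal) volume a b := by
    rw [intervalIntegrable_iff_integrableOn_Ioo_of_le hab.le]
    exact integrable_toReal_of_lintegral_ne_top hw hwfin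
  refine le_inv_ofReal_rpow_of_le_toReal_rpow_neg hα (mul_pos hα (sub_pos.2 hab)) hA0 hA
    (mul_sub_le_rpow_neg_of_ae_rpow_add_integral_le hα.le (ENNReal.toReal_pos hA0 hA) hab.le hint
      (fun _ => ENNReal.toReal_nonneg) ?_)
  filter_upwards [hle, ae_lt_top' hw hwfin, ae_restrict_mem measurableSet_Ioo] with t hwt hwt_top ht
  have hsub : Ioo a t ⊆ Ioo a b := Ioo_subset_Ioo_right ht.2.le
  have htfin : ∫⁻ s in Ioo a t, w s ≠ ∞ := ne_top_of_le_ne_top hwfin (lintegral_mono_set hsub)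
  rw [integral_toReal_eq_toReal_setLIntegral_Ioo ht.1.le (hw.mono_set hsub) htfin,
    ← ENNReal.toReal_add hA htfin, ENNReal.toReal_rpow]
  exact ENNReal.toReal_mono hwt_top.ne hwt

end BlowUp

lemma rpow_lintegral_le_lintegral_rpow {X : Type*} [MeasurableSpace X] {ν : Measure X}
    (hν : ν univ ≤ 1) {p : ℝ} (hp : 1 ≤ p) {f : X → ℝ≥0∞} (hf : AEMeasurable f ν) :
    (∫⁻ y, f y ∂ν) ^ p ≤ ∫⁻ y, f y ^ p ∂ν := by
  have hp0 : 0 < p := one_pos.trans_le hp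
  have hnorm : ∫⁻ y, f y ∂ν ≤ (∫⁻ y, f y ^ p ∂ν) ^ (1 / p) :=
    calc ∫⁻ y, f y ∂ν
        ≤ (∫⁻ y, f y ^ p ∂ν) ^ (1 / p) * ν univ ^ (1 - 1 / p) := by
          simpa [eLpNorm'_eq_lintegral_enorm] using
            eLpNorm'_le_eLpNorm'_mul_rpow_measure_univ one_pos hp hf.aestronglyMeasurable
      _ ≤ (∫⁻ y, f y ^ p ∂ν) ^ (1 / p) * 1 := by
          gcongr
          exact ENNReal.rpow_le_one hν (sub_nonneg.2 ((div_le_one hp0).2 hp))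
      _ = (∫⁻ y, f y ^ p ∂ν) ^ (1 / p) := mul_one _
  exact (ENNReal.le_rpow_inv_iff hp0).1 (by rwa [← one_div])

lemma lintegral_mul_lintegral_mul {X Y : Type*} [MeasurableSpace X] [MeasurableSpace Y]
    {μ : Measure X} [SFinite μ] {ν : Measure Y} [SFinite ν] {k : X → ℝ≥0∞} {l : X → Y → ℝ≥0∞}
    {f : Y → ℝ≥0∞} (hk : Measurable k) (hl : Measurable (Function.uncurry l)) (hf : Measurable f) :
    ∫⁻ x, k x * ∫⁻ y, l x y * f y ∂ν ∂μ = ∫⁻ y, (∫⁻ x, k x * l x y ∂μ) * f y ∂ν := by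
  have hlf (x : X) : Measurable fun y => l x y * f y := hl.of_uncurry_left.mul hf
  have hkl (y : Y) : Measurable fun x => k x * l x y := hk.mul hl.of_uncurry_right
  simp_rw [← lintegral_const_mul _ (hlf _), ← lintegral_mul_const _ (hkl _), mul_assoc]
  exact lintegral_lintegral_swap
    ((hk.comp measurable_fst).mul (hl.mul (hf.comp measurable_snd))).aemeasurable

lemma le_of_ae_restrict_Ioo_le {Y : Type*} [TopologicalSpace Y] [LinearOrder Y]
    [OrderClosedTopology Y] {B : Y} {c : ℝ → Y} {a t : ℝ} (hc : ContinuousOn c (Ioc a t))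
    (hat : a < t) (hle : ∀ᵐ s ∂volume.restrict (Ioo a t), B ≤ c s) : B ≤ c t := by
  rw [restrict_Ioo_eq_restrict_Ioc] at hle
  have hmin : (fun _ => B) =ᵐ[volume.restrict (Ioc a t)] fun s => min B (c s) :=
    hle.mono fun s hs => (min_eq_left hs).symm
  exact min_eq_left_iff.1 (Measure.eqOn_Ioc_of_ae_eq _ hmin continuousOn_const
    (continuousOn_const.inf hc) (right_mem_Ioc.2 hat)).symm

section SubMarkovSemigroup

open ProbabilityTheory

variable {X : Type*} [MeasurableSpace X] {μ : Measure X} {κ : Kernel (ℝ × X) X} {α T : ℝ}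
  {v₀ : X → ℝ≥0∞} {v : ℝ → X → ℝ≥0∞}

/-- A sub-Markov semigroup of transition kernels `κ (t, x)`, absolutely continuous with respect to
the reference measure `μ`; the operator at time `t` is `f ↦ ∫⁻ y, f y ∂κ (·, y)`. Making `(t, x)`
the argument of a single kernel encodes joint measurability, and `κ` is arbitrary at times
`t ≤ 0`. -/
structure IsSubMarkovSemigroup (κ : Kernel (ℝ × X) X) (μ : Measure X) : Prop where
  measure_univ_le_one : ∀ {t : ℝ}, 0 < t → ∀ x, κ (t, x) univ ≤ 1
  absolutelyContinuous : ∀ {t : ℝ}, 0 < t → ∀ x, κ (t, x) ≪ μ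
  bind_eq : ∀ {t s : ℝ}, 0 < t → 0 < s → ∀ x,
    (κ (t, x)).bind (fun y => κ (s, y)) = κ (t + s, x)

/-- A mild (integral) supersolution on `(0, T)` of `u_t = L u + u ^ (α + 1)` with initial value
`v₀`, where `L` generates the semigroup `κ`: the Duhamel formula with `=` weakened to `≤`, required
almost everywhere only. -/
structure IsMildSupersolution (κ : Kernel (ℝ × X) X) (μ : Measure X) (α T : ℝ) (v₀ : X → ℝ≥0∞)
    (v : ℝ → X → ℝ≥0∞) : Prop where
  measurable : Measurable (Function.uncurry v)
  ae_lt_top : ∀ᵐ t ∂volume.restrict (Ioo 0 T), ∀ᵐ x ∂μ, v t x < ∞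
  ae_duhamel_le : ∀ᵐ t ∂volume.restrict (Ioo 0 T), ∀ᵐ x ∂μ,
    ∫⁻ y, v₀ y ∂κ (t, x) + ∫⁻ s in Ioo 0 t, ∫⁻ y, v s y ^ (α + 1) ∂κ (t - s, x) ≤ v t x

lemma IsSubMarkovSemigroup.lintegral_lintegral (hκ : IsSubMarkovSemigroup κ μ) {t s : ℝ}
    (ht : 0 < t) (hs : 0 < s) {f : X → ℝ≥0∞} (hf : Measurable f) (x : X) :
    ∫⁻ y, ∫⁻ z, f z ∂κ (s, y) ∂κ (t, x) = ∫⁻ z, f z ∂κ (t + s, x) := by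
  have hmeas : Measurable fun y => κ (s, y) := κ.measurable.comp measurable_prodMk_left
  rw [← hκ.bind_eq ht hs x, Measure.lintegral_bind hmeas.aemeasurable hf.aemeasurable]

lemma IsSubMarkovSemigroup.lintegral_add_le_of_ae_le (hκ : IsSubMarkovSemigroup κ μ) {t s : ℝ}
    (ht : 0 < t) (hs : 0 < s) {f : X → ℝ≥0∞} (hf : Measurable f) {c : ℝ≥0∞}
    (hle : ∀ᵐ y ∂μ, ∫⁻ z, f z ∂κ (s, y) ≤ c) (x : X) :
    ∫⁻ z, f z ∂κ (t + s, x) ≤ c :=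
  calc ∫⁻ z, f z ∂κ (t + s, x)
      = ∫⁻ y, ∫⁻ z, f z ∂κ (s, y) ∂κ (t, x) := (hκ.lintegral_lintegral ht hs hf x).symm
    _ ≤ ∫⁻ _, c ∂κ (t, x) := lintegral_mono_ae ((hκ.absolutelyContinuous ht x).ae_le hle)
    _ = c * κ (t, x) univ := lintegral_const c
    _ ≤ c := mul_le_of_le_one_right' (hκ.measure_univ_le_one ht x)

variable [IsSFiniteKernel κ]

lemma measurable_lintegral_kernel_sub {f : ℝ → X → ℝ≥0∞} (hf : Measurable (Function.uncurry f))
    (t : ℝ) : Measurable fun p : ℝ × X => ∫⁻ y, f p.1 y ∂κ (t - p.1, p.2) := by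
  have hmap : Measurable fun p : ℝ × X => (t - p.1, p.2) := by fun_prop
  exact Measurable.lintegral_kernel_prod_right' (κ := κ.comap _ hmap)
    (f := fun q : (ℝ × X) × X => f q.1.1 q.2)
    (hf.comp (by fun_prop : Measurable fun q : (ℝ × X) × X => (q.1.1, q.2)))

lemma IsMildSupersolution.ae_duhamel_le_lintegral (hκ : IsSubMarkovSemigroup κ μ)
    (hv₀ : Measurable v₀) (hv : IsMildSupersolution κ μ α T v₀ v) :
    ∀ᵐ t ∂volume.restrict (Ioo 0 T), ∀ r > 0, ∀ x,
      ∫⁻ y, v₀ y ∂κ (r + t, x) + ∫⁻ s in Ioo 0 t, ∫⁻ y, v s y ^ (α + 1) ∂κ (r + t - s, x) ≤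
        ∫⁻ y, v t y ∂κ (r, x) := by
  have hpow : Measurable (Function.uncurry fun s y => v s y ^ (α + 1)) :=
    hv.measurable.pow_const _
  filter_upwards [hv.ae_duhamel_le, ae_restrict_mem measurableSet_Ioo] with t hle ht r hr x
  have hpush : ∀ s ∈ Ioo 0 t, ∫⁻ y, v s y ^ (α + 1) ∂κ (r + t - s, x) =
      ∫⁻ y, ∫⁻ z, v s z ^ (α + 1) ∂κ (t - s, y) ∂κ (r, x) := fun s hs => by
    have hpow_s : Measurable fun y => v s y ^ (α + 1) := hpow.comp measurable_prodMk_left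
    rw [hκ.lintegral_lintegral hr (sub_pos.2 hs.2) hpow_s x, add_sub_assoc]
  have hv₀_t : Measurable fun y => ∫⁻ z, v₀ z ∂κ (t, y) :=
    hv₀.lintegral_kernel.comp measurable_prodMk_left
  calc _ = ∫⁻ y, ∫⁻ z, v₀ z ∂κ (t, y) ∂κ (r, x) +
        ∫⁻ s in Ioo 0 t, ∫⁻ y, ∫⁻ z, v s z ^ (α + 1) ∂κ (t - s, y) ∂κ (r, x) := by
        rw [hκ.lintegral_lintegral hr ht.1 hv₀, setLIntegral_congr_fun measurableSet_Ioo hpush]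
    _ = ∫⁻ y, (∫⁻ z, v₀ z ∂κ (t, y) +
        ∫⁻ s in Ioo 0 t, ∫⁻ z, v s z ^ (α + 1) ∂κ (t - s, y)) ∂κ (r, x) := by
        rw [lintegral_add_left hv₀_t,
          lintegral_lintegral_swap (measurable_lintegral_kernel_sub hpow t).aemeasurable]
    _ ≤ ∫⁻ y, v t y ∂κ (r, x) := lintegral_mono_ae ((hκ.absolutelyContinuous hr x).ae_le hle)

lemma IsMildSupersolution.ae_ae_lintegral_le (hκ : IsSubMarkovSemigroup κ μ) (hα : 0 < α)
    (hv₀ : Measurable v₀) (hv : IsMildSupersolution κ μ α T v₀ v) :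
    ∀ᵐ τ ∂volume.restrict (Ioo 0 T), ∀ᵐ x ∂μ,
      ∫⁻ y, v₀ y ∂κ (τ, x) ≤ (ENNReal.ofReal ((α * τ) ^ (1 / α)))⁻¹ := by
  filter_upwards [hv.ae_lt_top, hv.ae_duhamel_le, ae_restrict_mem measurableSet_Ioo]
    with τ hfin hduhamel hτ
  filter_upwards [hfin, hduhamel] with x hfin_x hduhamel_x
  set m : ℝ → ℝ≥0∞ := fun s => ∫⁻ y, v s y ∂κ (τ - s, x)
  have hm_meas : Measurable m :=
    (measurable_lintegral_kernel_sub hv.measurable τ).comp measurable_prodMk_right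
  have hjensen : ∀ t ≤ τ, ∫⁻ s in Ioo 0 t, m s ^ (α + 1) ≤
      ∫⁻ s in Ioo 0 t, ∫⁻ y, v s y ^ (α + 1) ∂κ (τ - s, x) := fun t ht =>
    setLIntegral_mono' measurableSet_Ioo fun s hs => rpow_lintegral_le_lintegral_rpow
      (hκ.measure_univ_le_one (sub_pos.2 (hs.2.trans_le ht)) x) (by linarith)
      (hv.measurable.comp measurable_prodMk_left).aemeasurable
  rw [show α * τ = α * (τ - 0) by rw [sub_zero]]
  refine le_inv_ofReal_rpow_of_ae_rpow_add_lintegral_le hα hτ.1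
    (hm_meas.pow_const (α + 1)).aemeasurable ?_ ?_
  · exact ne_top_of_le_ne_top hfin_x.ne ((add_le_add_right (hjensen τ le_rfl) _).trans hduhamel_x)
  · filter_upwards [ae_restrict_of_ae_restrict_of_subset (Ioo_subset_Ioo_right hτ.2.le)
      (hv.ae_duhamel_le_lintegral hκ hv₀), ae_restrict_mem measurableSet_Ioo] with t hle ht
    refine ENNReal.rpow_le_rpow ?_ (by linarith)
    have hle_m := hle (τ - t) (sub_pos.2 ht.2) x
    rw [sub_add_cancel] at hle_m
    exact (add_le_add_right (hjensen t ht.2.le) _).trans hle_m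

theorem stmt0_general (hκ : IsSubMarkovSemigroup κ μ) (hα : 0 < α) (hv₀ : Measurable v₀)
    (hv : IsMildSupersolution κ μ α T v₀ v) :
    ∀ t ∈ Ioc 0 T, ENNReal.ofReal ((α * t) ^ (1 / α)) * ⨆ x, ∫⁻ y, v₀ y ∂κ (t, x) ≤ 1 := by
  intro t ht
  rw [mul_comm, ← ENNReal.le_inv_iff_mul_le]
  refine iSup_le fun x => le_of_ae_restrict_Ioo_le
    (c := fun τ => (ENNReal.ofReal ((α * τ) ^ (1 / α)))⁻¹) (Continuous.continuousOn ?_) ht.1 ?_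
  · exact (ENNReal.continuous_ofReal.comp ((Real.continuous_rpow_const (by positivity)).comp
      (continuous_const_mul α))).inv
  · filter_upwards [ae_restrict_of_ae_restrict_of_subset (Ioo_subset_Ioo_right ht.2)
      (hv.ae_ae_lintegral_le hκ hα hv₀), ae_restrict_mem measurableSet_Ioo] with τ hle hτ
    rw [← sub_add_cancel t τ]
    exact hκ.lintegral_add_le_of_ae_le (sub_pos.2 hτ.2) hτ.1 hv₀ hle x

end SubMarkovSemigroup

section HeatSemigroup

open ProbabilityTheory

lemma norm_sub_sq_div_add_norm_sub_sq_div {E : Type*} [NormedAddCommGroup E]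
    [InnerProductSpace ℝ E] {t s : ℝ} (ht : 0 < t) (hs : 0 < s) (x y z : E) :
    ‖x - y‖ ^ 2 / t + ‖y - z‖ ^ 2 / s = ‖x - z‖ ^ 2 / (t + s) +
      ‖(s / (t + s)) • x + (t / (t + s)) • z - y‖ ^ 2 / (t * s / (t + s)) := by
  have hxz : x - z = (x - y) + (y - z) := (sub_add_sub_cancel x y z).symm
  have hcenter : (s / (t + s)) • x + (t / (t + s)) • z - y =
      (s / (t + s)) • (x - y) - (t / (t + s)) • (y - z) := by
    have hone : s / (t + s) + t / (t + s) = 1 := by field_simp; ring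
    linear_combination (norm := module) hone • y
  rw [hxz, hcenter, norm_add_sq_real, norm_sub_sq_real (_ • _), norm_smul, norm_smul,
    inner_smul_left, inner_smul_right, mul_pow, mul_pow]
  simp only [Real.norm_eq_abs, sq_abs, conj_trivial]
  field_simp
  ring

variable {N : ℕ} {t s : ℝ}

lemma heatKernel_nonneg (ht : 0 < t) (x y : EuclideanSpace ℝ (Fin N)) :
    0 ≤ heatKernel N t x y := by
  unfold heatKernel
  positivity

lemma measurable_ofReal_heatKernel (N : ℕ) :
    Measurable (Function.uncurry fun (p : ℝ × EuclideanSpace ℝ (Fin N)) y =>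
      ENNReal.ofReal (heatKernel N p.1 p.2 y)) := by
  unfold heatKernel Function.uncurry
  fun_prop

lemma measurable_ofReal_heatKernel_time (t : ℝ) :
    Measurable (Function.uncurry fun x y => ENNReal.ofReal (heatKernel N t x y)) := by
  unfold heatKernel Function.uncurry
  fun_prop

lemma integral_heatKernel (ht : 0 < t) (x : EuclideanSpace ℝ (Fin N)) :
    ∫ y, heatKernel N t x y = 1 := by
  calc ∫ y, heatKernel N t x y
      = ∫ y, (4 * π * t) ^ (-(N : ℝ) / 2) * Real.exp (-(1 / (4 * t)) * ‖x - y‖ ^ 2) := by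
        refine integral_congr_ae (ae_of_all _ fun y => ?_)
        simp only [heatKernel]
        congr 2
        ring
    _ = (4 * π * t) ^ (-(N : ℝ) / 2) * (π / (1 / (4 * t))) ^ ((N : ℝ) / 2) := by
        rw [integral_sub_left_eq_self (fun v : EuclideanSpace ℝ (Fin N) =>
          (4 * π * t) ^ (-(N : ℝ) / 2) * Real.exp (-(1 / (4 * t)) * ‖v‖ ^ 2)) volume x,
          integral_const_mul, GaussianFourier.integral_rexp_neg_mul_sq_norm (by positivity),
          finrank_euclideanSpace_fin]
    _ = 1 := by
        rw [show π / (1 / (4 * t)) = 4 * π * t by field_simp, ← Real.rpow_add (by positivity),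
          neg_div, neg_add_cancel, Real.rpow_zero]

lemma lintegral_heatKernel (ht : 0 < t) (x : EuclideanSpace ℝ (Fin N)) :
    ∫⁻ y, ENNReal.ofReal (heatKernel N t x y) = 1 := by
  have hint : Integrable fun y => heatKernel N t x y :=
    .of_integral_ne_zero (by simp [integral_heatKernel ht x])
  rw [← ofReal_integral_eq_lintegral_ofReal hint (ae_of_all _ (heatKernel_nonneg ht x)),
    integral_heatKernel ht x, ENNReal.ofReal_one]

lemma heatKernel_mul_heatKernel (ht : 0 < t) (hs : 0 < s) (x y z : EuclideanSpace ℝ (Fin N)) :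
    heatKernel N t x y * heatKernel N s y z =
      heatKernel N (t + s) x z *
        heatKernel N (t * s / (t + s)) ((s / (t + s)) • x + (t / (t + s)) • z) y := by
  unfold heatKernel
  rw [mul_mul_mul_comm, mul_mul_mul_comm ((4 * π * (t + s)) ^ (-(N : ℝ) / 2)),
    ← Real.mul_rpow (by positivity) (by positivity),
    ← Real.mul_rpow (by positivity) (by positivity), ← Real.exp_add, ← Real.exp_add]
  congr 2
  · field_simp
  · simp only [div_mul_eq_div_div_swap]
    linear_combination (-1 / 4 : ℝ) * norm_sub_sq_div_add_norm_sub_sq_div ht hs x y z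

lemma lintegral_heatKernel_mul_heatKernel (ht : 0 < t) (hs : 0 < s)
    (x z : EuclideanSpace ℝ (Fin N)) :
    ∫⁻ y, ENNReal.ofReal (heatKernel N t x y) * ENNReal.ofReal (heatKernel N s y z) =
      ENNReal.ofReal (heatKernel N (t + s) x z) := by
  have hts : 0 < t + s := add_pos ht hs
  simp_rw [← ENNReal.ofReal_mul (heatKernel_nonneg ht _ _), heatKernel_mul_heatKernel ht hs,
    ENNReal.ofReal_mul (heatKernel_nonneg hts _ _)]
  rw [lintegral_const_mul' _ _ ENNReal.ofReal_ne_top, lintegral_heatKernel (by positivity), mul_one]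

/-- The heat semigroup on `ℝ^N` as a transition kernel: `heatSemigroup N (t, x)` is the measure with
Lebesgue density `G(t,x,·)`, so that `(e^{tΔ}f)(x) = ∫⁻ y, f y ∂heatSemigroup N (t, x)`. -/
noncomputable def heatSemigroup (N : ℕ) :
    Kernel (ℝ × EuclideanSpace ℝ (Fin N)) (EuclideanSpace ℝ (Fin N)) :=
  (Kernel.const _ volume).withDensity fun p y => ENNReal.ofReal (heatKernel N p.1 p.2 y)

instance : IsSFiniteKernel (heatSemigroup N) :=
  Kernel.IsSFiniteKernel.withDensity _ fun _ _ => ENNReal.ofReal_ne_top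

lemma lintegral_heatSemigroup (t : ℝ) (x : EuclideanSpace ℝ (Fin N))
    {f : EuclideanSpace ℝ (Fin N) → ℝ≥0∞} (hf : Measurable f) :
    ∫⁻ y, f y ∂heatSemigroup N (t, x) = ∫⁻ y, ENNReal.ofReal (heatKernel N t x y) * f y := by
  rw [heatSemigroup, Kernel.lintegral_withDensity _ (measurable_ofReal_heatKernel N) _ hf,
    Kernel.const_apply]

lemma lintegral_lintegral_heatSemigroup (ht : 0 < t) (hs : 0 < s)
    {f : EuclideanSpace ℝ (Fin N) → ℝ≥0∞} (hf : Measurable f) (x : EuclideanSpace ℝ (Fin N)) :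
    ∫⁻ y, ∫⁻ z, f z ∂heatSemigroup N (s, y) ∂heatSemigroup N (t, x) =
      ∫⁻ z, f z ∂heatSemigroup N (t + s, x) := by
  have hmeas : Measurable fun y => ∫⁻ z, f z ∂heatSemigroup N (s, y) :=
    hf.lintegral_kernel.comp measurable_prodMk_left
  rw [lintegral_heatSemigroup t x hmeas, lintegral_heatSemigroup (t + s) x hf]
  simp_rw [lintegral_heatSemigroup s _ hf, ← lintegral_heatKernel_mul_heatKernel ht hs x]
  exact lintegral_mul_lintegral_mul
    (measurable_ofReal_heatKernel_time t).of_uncurry_left (measurable_ofReal_heatKernel_time s) hf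

lemma lintegral_ofReal_heatKernel_mul (ht : 0 < t) (x : EuclideanSpace ℝ (Fin N))
    {f : EuclideanSpace ℝ (Fin N) → ℝ} (hf : Measurable f) :
    ∫⁻ y, ENNReal.ofReal (heatKernel N t x y * f y) =
      ∫⁻ y, ENNReal.ofReal (f y) ∂heatSemigroup N (t, x) := by
  simp_rw [lintegral_heatSemigroup t x hf.ennreal_ofReal,
    ENNReal.ofReal_mul (heatKernel_nonneg ht x _)]

lemma isSubMarkovSemigroup_heatSemigroup (N : ℕ) :
    IsSubMarkovSemigroup (heatSemigroup N) volume where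
  measure_univ_le_one {t} ht x := by
    rw [← lintegral_one, lintegral_heatSemigroup t x measurable_const]
    simp only [mul_one, lintegral_heatKernel ht x, le_refl]
  absolutelyContinuous {t} _ x :=
    Kernel.withDensity_absolutelyContinuous (κ := Kernel.const _ volume) _ (t, x)
  bind_eq {t s} ht hs x := by
    have hmeas : Measurable fun y => heatSemigroup N (s, y) :=
      (heatSemigroup N).measurable.comp measurable_prodMk_left
    refine Measure.ext_of_lintegral _ fun f hf => ?_
    rw [Measure.lintegral_bind hmeas.aemeasurable hf.aemeasurable,
      lintegral_lintegral_heatSemigroup ht hs hf x]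

lemma isMildSupersolution_heatSemigroup {α T : ℝ} (hα : 0 ≤ α + 1)
    {u₀ : EuclideanSpace ℝ (Fin N) → ℝ} (hu₀ : Measurable u₀)
    {u : ℝ → EuclideanSpace ℝ (Fin N) → ℝ} (hu : Measurable (Function.uncurry u))
    (hu_nonneg : ∀ t ∈ Ioo 0 T, ∀ x, 0 ≤ u t x)
    (hle : ∀ᵐ p : ℝ × EuclideanSpace ℝ (Fin N) ∂volume, p.1 ∈ Ioo 0 T →
      (∫⁻ y, ENNReal.ofReal (heatKernel N p.1 p.2 y * u₀ y)) +
        (∫⁻ s in Ioo (0 : ℝ) p.1, ∫⁻ y,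
          ENNReal.ofReal (heatKernel N (p.1 - s) p.2 y * u s y ^ (α + 1))) ≤
        ENNReal.ofReal (u p.1 p.2)) :
    IsMildSupersolution (heatSemigroup N) volume α T (fun y => ENNReal.ofReal (u₀ y))
      fun t x => ENNReal.ofReal (u t x) where
  measurable := hu.ennreal_ofReal
  ae_lt_top := ae_of_all _ fun _ => ae_of_all _ fun _ => ENNReal.ofReal_lt_top
  ae_duhamel_le := by
    filter_upwards [ae_restrict_of_ae (Measure.ae_ae_of_ae_prod hle),
      ae_restrict_mem measurableSet_Ioo] with t hle_t ht
    filter_upwards [hle_t] with x hle_x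
    refine le_of_eq_of_le ?_ (hle_x ht)
    rw [lintegral_ofReal_heatKernel_mul ht.1 x hu₀]
    congr 1
    refine setLIntegral_congr_fun measurableSet_Ioo fun s hs => ?_
    have hus : Measurable (u s) := hu.comp measurable_prodMk_left
    simp_rw [ENNReal.ofReal_rpow_of_nonneg (hu_nonneg s ⟨hs.1, hs.2.trans ht.2⟩ _) hα]
    exact (lintegral_ofReal_heatKernel_mul (sub_pos.2 hs.2) x (hus.pow_const _)).symm

end HeatSemigroup

/-- If there exists a nonnegative integral solution of
`u_t = Δu + u^{α+1}` on `(0,T) × ℝ^N` with initial value `u₀`, then for every `t ∈ (0,T)`,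
`(αt)^{1/α} · ess sup_x (e^{tΔ}u₀)(x) ≤ 1`. -/
theorem stmt0 (N : ℕ) (hN : 1 ≤ N) (α T : ℝ) (hα : 0 < α) (hT : 0 < T)
    (u₀ : EuclideanSpace ℝ (Fin N) → ℝ) (hu₀m : Measurable u₀) (hu₀ : ∀ x, 0 ≤ u₀ x)
    (u : ℝ → EuclideanSpace ℝ (Fin N) → ℝ)
    (hum : Measurable (Function.uncurry u))
    (hupos : ∀ t ∈ Ioo 0 T, ∀ x, 0 ≤ u t x)
    (heq : ∀ᵐ p : ℝ × EuclideanSpace ℝ (Fin N) ∂volume, p.1 ∈ Ioo 0 T →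
      ENNReal.ofReal (u p.1 p.2) =
        (∫⁻ y, ENNReal.ofReal (heatKernel N p.1 p.2 y * u₀ y)) +
        ∫⁻ s in Ioo (0 : ℝ) p.1, ∫⁻ y,
          ENNReal.ofReal (heatKernel N (p.1 - s) p.2 y * u s y ^ (α + 1))) :
    ∀ t ∈ Ioo 0 T,
      ENNReal.ofReal ((α * t) ^ (1 / α)) *
        essSup (fun x => ∫⁻ y, ENNReal.ofReal (heatKernel N t x y * u₀ y)) volume ≤ 1 := by
  intro t ht
  have hsuper := isMildSupersolution_heatSemigroup (by positivity) hu₀m hum hupos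
    (heq.mono fun _ hp htT => (hp htT).ge)
  simp_rw [lintegral_ofReal_heatKernel_mul ht.1 _ hu₀m]
  exact (mul_le_mul_right essSup_le_iSup _).trans (stmt0_general
    (isSubMarkovSemigroup_heatSemigroup N) hα hu₀m.ennreal_ofReal hsuper t ⟨ht.1, ht.2.le⟩)
end

section
/- Let N ≥ 1 and let f : ℝ^N → ℝ be of class C² such that f and Δf are bounded and uniformly continuous on ℝ^N. Then ∇f is bounded and uniformly continuous on ℝ^N, and there is a constant C depending only on N (not on f) such that ‖∇f‖_{L^∞(ℝ^N)} ≤ C (‖f‖_{L^∞(ℝ^N)} + ‖Δf‖_{L^∞(ℝ^N)}). -/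
open MeasureTheory Real Set Filter

/-- The Laplacian of `f : ℝ^N → ℝ`, as the sum of the pure second partial derivatives. -/
noncomputable def lap (N : ℕ) (f : EuclideanSpace ℝ (Fin N) → ℝ)
    (x : EuclideanSpace ℝ (Fin N)) : ℝ :=
  ∑ i : Fin N, iteratedFDeriv ℝ 2 f x ![EuclideanSpace.single i 1, EuclideanSpace.single i 1]

/-! Along a unit vector `e`, the difference of `f` and its reflection in the hyperplane through `x₀`
orthogonal to `e` vanishes on that hyperplane, so on a half ball of radius `r` the weak maximum
principle bounds it by an explicit quadratic barrier. Differentiating at `x₀` gives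
`‖∇f(x₀)‖ ≤ n M / r + L r / 2` whenever `|f| ≤ M` and `|Δf| ≤ L` on the ball, `n` being the
dimension. With `r = 1` the gradient is bounded, so `f` is Lipschitz; applying the estimate with
`r = √‖a - b‖` to `x ↦ f (x + (a - b)) - f x` then shows that the gradient is Hölder continuous with
exponent `1/2`. -/

open InnerProductSpace Laplacian Metric
open scoped Topology Uniformity RealInnerProductSpace

section SecondDerivative

variable {E : Type*} [NormedAddCommGroup E] [NormedSpace ℝ E] {f : E → ℝ} {x : E}

lemma deriv_deriv_comp_add_smul (hf : ContDiffAt ℝ 2 f x) (v : E) :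
    deriv (deriv fun t : ℝ ↦ f (x + t • v)) 0 = iteratedFDeriv ℝ 2 f x ![v, v] := by
  have hline (t : ℝ) : HasDerivAt (fun t : ℝ ↦ x + t • v) v t := by
    simpa using ((hasDerivAt_id t).smul_const v).const_add x
  have hline_tendsto : Tendsto (fun t : ℝ ↦ x + t • v) (𝓝 0) (𝓝 x) := by
    simpa using (hline 0).continuousAt.tendsto
  have hderiv : (deriv fun t : ℝ ↦ f (x + t • v)) =ᶠ[𝓝 0] fun t ↦ fderiv ℝ f (x + t • v) v := by
    filter_upwards [hline_tendsto.eventually (hf.eventually (by simp))] with t ht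
    exact ((ht.differentiableAt two_ne_zero).hasFDerivAt.comp_hasDerivAt t (hline t)).deriv
  have hfderiv : HasFDerivAt (fderiv ℝ f) (fderiv ℝ (fderiv ℝ f) x) (x + (0 : ℝ) • v) := by
    simpa using ((hf.fderiv_right (m := 1) (by norm_num)).differentiableAt one_ne_zero).hasFDerivAt
  have hsecond : HasDerivAt (fun t : ℝ ↦ fderiv ℝ f (x + t • v)) (fderiv ℝ (fderiv ℝ f) x v) 0 :=
    hfderiv.comp_hasDerivAt 0 (hline 0)
  rw [hderiv.deriv_eq, iteratedFDeriv_two_apply]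
  simpa using (hsecond.clm_apply (hasDerivAt_const 0 v)).deriv

lemma iteratedFDeriv_two_nonpos_of_isLocalMax (h : IsLocalMax f x) (hf : ContDiffAt ℝ 2 f x)
    (v : E) : iteratedFDeriv ℝ 2 f x ![v, v] ≤ 0 := by
  rw [← deriv_deriv_comp_add_smul hf]
  set g : ℝ → ℝ := fun t ↦ f (x + t • v)
  have hline : ContinuousAt (fun t : ℝ ↦ x + t • v) 0 := by fun_prop
  have hgmax : IsLocalMax g 0 := by
    simpa [g, IsLocalMax, IsMaxFilter] using
      hline.tendsto.eventually (p := (f · ≤ f x)) (by simpa using! h)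
  have hgcont : ContinuousAt g 0 :=
    ContinuousAt.comp (g := f) (by simpa using hf.continuousAt) hline
  by_contra! hpos
  -- `g` has a local minimum and a local maximum at `0`, so it is constant near `0`.
  have hgmin : IsLocalMin g 0 := isLocalMin_of_deriv_deriv_pos hpos hgmax.deriv_eq_zero hgcont
  have hgconst : g =ᶠ[𝓝 0] fun _ ↦ g 0 := by
    filter_upwards [hgmax, hgmin] with t hmax hmin using le_antisymm hmax hmin
  simp [hgconst.deriv.deriv_eq] at hpos

end SecondDerivative

variable {E : Type*} [NormedAddCommGroup E] [InnerProductSpace ℝ E]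

section HalfBall

/-- The open half ball `{x : ‖x‖ < r, ⟪e, x⟫ > 0}`, the domain of comparison for differences of a
function and its reflection in the hyperplane orthogonal to `e`. -/
def halfBall (e : E) (r : ℝ) : Set E := ball 0 r ∩ {x | 0 < ⟪e, x⟫}

/-- A barrier on `halfBall e r`, for a unit vector `e`: its Laplacian is `-B`, it is nonnegative on
the flat part of the boundary and at least `A` on the spherical part. -/
noncomputable def halfBallBarrier (e : E) (r A B : ℝ) (x : E) : ℝ :=
  A / r ^ 2 * ‖x‖ ^ 2 + (Module.finrank ℝ E * A / r ^ 2 + B / 2) * (⟪e, x⟫ * (r - ⟪e, x⟫))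

variable {e : E} {r A B : ℝ} {x : E}

lemma isOpen_halfBall (e : E) (r : ℝ) : IsOpen (halfBall e r) :=
  isOpen_ball.inter (isOpen_lt continuous_const (by fun_prop))

lemma closure_halfBall_subset (e : E) (r : ℝ) :
    closure (halfBall e r) ⊆ closedBall 0 r ∩ {x | 0 ≤ ⟪e, x⟫} :=
  closure_minimal
    (inter_subset_inter ball_subset_closedBall (ofPred_subset_ofPred.2 fun _ ↦ le_of_lt))
    (isClosed_closedBall.inter (isClosed_le continuous_const (by fun_prop)))

lemma norm_eq_or_inner_eq_zero_of_mem_frontier_halfBall (hx : x ∈ frontier (halfBall e r)) :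
    ‖x‖ = r ∨ ⟪e, x⟫ = 0 := by
  obtain ⟨hball, hinner⟩ := closure_halfBall_subset e r (frontier_subset_closure hx)
  rw [(isOpen_halfBall e r).frontier_eq] at hx
  rw [mem_closedBall_zero_iff] at hball
  by_contra! hne
  exact hx.2 ⟨mem_ball_zero_iff.2 (hball.lt_of_ne hne.1), lt_of_le_of_ne hinner hne.2.symm⟩

lemma contDiff_inner_mul_sub_inner (e : E) (r : ℝ) :
    ContDiff ℝ 2 fun y ↦ ⟪e, y⟫ * (r - ⟪e, y⟫) :=
  have hinner : ContDiff ℝ 2 fun y ↦ ⟪e, y⟫ := (innerSL ℝ e).contDiff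
  hinner.mul (contDiff_const.sub hinner)

lemma contDiff_halfBallBarrier (e : E) (r A B : ℝ) : ContDiff ℝ 2 (halfBallBarrier e r A B) :=
  (contDiff_const.mul (contDiff_norm_sq ℝ)).add
    (contDiff_const.mul (contDiff_inner_mul_sub_inner e r))

lemma norm_sq_le_halfBallBarrier (he : ‖e‖ = 1) (hA : 0 ≤ A) (hB : 0 ≤ B)
    (hx : x ∈ closedBall 0 r ∩ {x | 0 ≤ ⟪e, x⟫}) :
    A / r ^ 2 * ‖x‖ ^ 2 ≤ halfBallBarrier e r A B x := by
  have hinner_le : ⟪e, x⟫ ≤ r := by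
    simpa [he] using (real_inner_le_norm e x).trans (by simpa [he] using hx.1)
  have : 0 ≤ ⟪e, x⟫ * (r - ⟪e, x⟫) := mul_nonneg hx.2 (sub_nonneg.2 hinner_le)
  exact le_add_of_nonneg_right (by positivity)

end HalfBall

variable [FiniteDimensional ℝ E]

section Laplacian

lemma laplacian_comp_add_left (f : E → ℝ) (a x : E) :
    Δ (fun y ↦ f (a + y)) x = Δ f (a + x) := by
  simp [laplacian_eq_iteratedFDeriv_stdOrthonormalBasis, iteratedFDeriv_comp_add_left]

lemma laplacian_comp_linearIsometryEquiv (f : E → ℝ) (A : E ≃ₗᵢ[ℝ] E) (x : E) :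
    Δ (fun y ↦ f (A y)) x = Δ f (A x) := by
  rw [laplacian_eq_iteratedFDeriv_stdOrthonormalBasis,
    laplacian_eq_iteratedFDeriv_orthonormalBasis f ((stdOrthonormalBasis ℝ E).map A)]
  refine Finset.sum_congr rfl fun i _ ↦ ?_
  have h := A.toContinuousLinearEquiv.iteratedFDerivWithin_comp_right f uniqueDiffOn_univ
    (mem_univ (A x)) 2
  simp only [preimage_univ, iteratedFDerivWithin_univ] at h
  change iteratedFDeriv ℝ 2 (f ∘ A.toContinuousLinearEquiv) x _ = _
  rw [h]
  simp only [ContinuousMultilinearMap.compContinuousLinearMap_apply, OrthonormalBasis.map_apply]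
  congr 1
  ext1 j
  fin_cases j <;> rfl

lemma laplacian_norm_sq (x : E) : Δ (fun y : E ↦ ‖y‖ ^ 2) x = 2 * Module.finrank ℝ E := by
  have hsecond (v : E) : iteratedFDeriv ℝ 2 (fun y : E ↦ ‖y‖ ^ 2) x ![v, v] = 2 * ‖v‖ ^ 2 := by
    have hfderiv : fderiv ℝ (2 • ⇑(innerSL ℝ (E := E))) x = 2 • innerSL ℝ (E := E) :=
      (2 • innerSL ℝ (E := E) : E →L[ℝ] E →L[ℝ] ℝ).fderiv
    rw [iteratedFDeriv_two_apply, fderiv_norm_sq, hfderiv]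
    simp [innerSL_apply_apply ℝ]
  simp [laplacian_eq_iteratedFDeriv_stdOrthonormalBasis, hsecond, mul_comm]

lemma laplacian_inner_mul_sub_inner (e : E) (r : ℝ) (x : E) :
    Δ (fun y ↦ ⟪e, y⟫ * (r - ⟪e, y⟫)) x = -2 * ‖e‖ ^ 2 := by
  have hinner (y : E) : HasFDerivAt (fun y ↦ ⟪e, y⟫) (innerSL ℝ e) y := (innerSL ℝ e).hasFDerivAt
  have hfderiv : fderiv ℝ (fun y ↦ ⟪e, y⟫ * (r - ⟪e, y⟫)) =
      fun y ↦ (r - 2 * ⟪e, y⟫) • innerSL ℝ e := by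
    ext1 y
    rw [((hinner y).fun_mul ((hinner y).const_sub r)).fderiv]
    module
  have hsecond (v : E) :
      iteratedFDeriv ℝ 2 (fun y ↦ ⟪e, y⟫ * (r - ⟪e, y⟫)) x ![v, v] = -2 * ⟪e, v⟫ ^ 2 := by
    rw [iteratedFDeriv_two_apply, hfderiv,
      (((hinner x).const_mul 2).const_sub r |>.smul_const (innerSL ℝ e)).fderiv]
    simp [sq, mul_assoc]
  simp only [laplacian_eq_iteratedFDeriv_stdOrthonormalBasis, hsecond, ← Finset.mul_sum,
    (stdOrthonormalBasis ℝ E).sum_sq_inner_left e]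

lemma laplacian_nonpos_of_isLocalMax {u : E → ℝ} {x : E} (h : IsLocalMax u x)
    (hu : ContDiffAt ℝ 2 u x) : Δ u x ≤ 0 := by
  rw [laplacian_eq_iteratedFDeriv_stdOrthonormalBasis]
  exact Finset.sum_nonpos fun i _ ↦ iteratedFDeriv_two_nonpos_of_isLocalMax h hu _

end Laplacian

section MaximumPrinciple

variable {U : Set E} {u : E → ℝ} {c : ℝ}

lemma le_of_laplacian_pos_of_frontier_le (hU : IsOpen U) (hUb : Bornology.IsBounded U)
    (huc : ContinuousOn u (closure U)) (hud : ∀ x ∈ U, ContDiffAt ℝ 2 u x)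
    (hΔ : ∀ x ∈ U, 0 < Δ u x) (hfr : ∀ x ∈ frontier U, u x ≤ c) {x : E} (hx : x ∈ U) :
    u x ≤ c := by
  obtain ⟨p, hp, hmax⟩ := hUb.isCompact_closure.exists_isMaxOn ⟨x, subset_closure hx⟩ huc
  refine (hmax (subset_closure hx)).trans (hfr p ?_)
  rw [hU.frontier_eq]
  refine ⟨hp, fun hpU ↦ (hΔ p hpU).not_ge ?_⟩
  exact laplacian_nonpos_of_isLocalMax
    ((hmax.on_subset subset_closure).isLocalMax (hU.mem_nhds hpU)) (hud p hpU)

lemma le_of_laplacian_nonneg_of_frontier_le [Nontrivial E] (hU : IsOpen U)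
    (hUb : Bornology.IsBounded U) (huc : ContinuousOn u (closure U))
    (hud : ∀ x ∈ U, ContDiffAt ℝ 2 u x) (hΔ : ∀ x ∈ U, 0 ≤ Δ u x)
    (hfr : ∀ x ∈ frontier U, u x ≤ c) {x : E} (hx : x ∈ U) : u x ≤ c := by
  obtain ⟨R, hR⟩ := hUb.closure.exists_norm_le
  have hperturb (ε : ℝ) (hε : 0 < ε) : u x + ε * ‖x‖ ^ 2 ≤ c + ε * R ^ 2 := by
    have hdiff (y : E) : ContDiffAt ℝ 2 (ε • fun y : E ↦ ‖y‖ ^ 2) y :=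
      contDiffAt_const.smul (contDiff_norm_sq ℝ).contDiffAt
    refine le_of_laplacian_pos_of_frontier_le (u := u + ε • fun y ↦ ‖y‖ ^ 2) hU hUb
      (huc.add (by fun_prop)) (fun y hy ↦ (hud y hy).add (hdiff y))
      (fun y hy ↦ ?_) (fun y hy ↦ ?_) hx
    · have hn : (0 : ℝ) < Module.finrank ℝ E := by exact_mod_cast Module.finrank_pos
      rw [(hud y hy).laplacian_add (hdiff y), laplacian_smul ε (contDiff_norm_sq ℝ).contDiffAt,
        laplacian_norm_sq, smul_eq_mul]
      have := hΔ y hy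
      positivity
    · simp only [Pi.add_apply, Pi.smul_apply, smul_eq_mul]
      have := hR y (frontier_subset_closure hy)
      gcongr
      exact hfr y hy
  have hlim (a b : ℝ) : Tendsto (fun ε ↦ a + ε * b) (𝓝[>] 0) (𝓝 a) := by
    have : ContinuousAt (fun ε ↦ a + ε * b) 0 := by fun_prop
    simpa using this.tendsto.mono_left nhdsWithin_le_nhds
  exact le_of_tendsto_of_tendsto (hlim _ _) (hlim _ _)
    (eventually_nhdsWithin_of_forall hperturb)

end MaximumPrinciple

section BarrierComparison

variable {e : E} {r A B : ℝ}

lemma laplacian_halfBallBarrier (he : ‖e‖ = 1) (r A B : ℝ) (x : E) :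
    Δ (halfBallBarrier e r A B) x = -B := by
  have hsq : ContDiffAt ℝ 2 (fun y : E ↦ ‖y‖ ^ 2) x := (contDiff_norm_sq ℝ).contDiffAt
  have hinner : ContDiffAt ℝ 2 (fun y ↦ ⟪e, y⟫ * (r - ⟪e, y⟫)) x :=
    (contDiff_inner_mul_sub_inner e r).contDiffAt
  have hlinear (a b : ℝ) :
      Δ (a • (fun y : E ↦ ‖y‖ ^ 2) + b • fun y ↦ ⟪e, y⟫ * (r - ⟪e, y⟫)) x =
        a * (2 * Module.finrank ℝ E) + b * (-2 * ‖e‖ ^ 2) := by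
    rw [← laplacian_norm_sq x, ← laplacian_inner_mul_sub_inner e r x, ← smul_eq_mul, ← smul_eq_mul,
      ← laplacian_smul a hsq, ← laplacian_smul b hinner]
    exact ContDiffAt.laplacian_add (contDiffAt_const.smul hsq) (contDiffAt_const.smul hinner)
  refine (hlinear _ _).trans ?_
  rw [he]
  ring

lemma le_halfBallBarrier {w : E → ℝ} (he : ‖e‖ = 1) (hA : 0 ≤ A) (hB : 0 ≤ B)
    (hwc : ContinuousOn w (closure (halfBall e r)))
    (hwd : ∀ x ∈ halfBall e r, ContDiffAt ℝ 2 w x)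
    (hΔ : ∀ x ∈ halfBall e r, -B ≤ Δ w x)
    (hsphere : ∀ x, ‖x‖ = r → w x ≤ A) (hflat : ∀ x, ⟪e, x⟫ = 0 → w x ≤ 0)
    {x : E} (hx : x ∈ halfBall e r) : w x ≤ halfBallBarrier e r A B x := by
  have hr : 0 < r := pos_of_mem_ball hx.1
  have : Nontrivial E := ⟨e, 0, norm_ne_zero_iff.1 (by simp [he])⟩
  have hbarrier := contDiff_halfBallBarrier e r A B
  refine sub_nonpos.1 (le_of_laplacian_nonneg_of_frontier_le (u := w - halfBallBarrier e r A B)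
    (isOpen_halfBall e r) (isBounded_ball.subset inter_subset_left)
    (hwc.sub hbarrier.continuous.continuousOn)
    (fun y hy ↦ (hwd y hy).sub hbarrier.contDiffAt) (fun y hy ↦ ?_) (fun y hy ↦ ?_) hx)
  · rw [(hwd y hy).laplacian_sub hbarrier.contDiffAt, laplacian_halfBallBarrier he]
    linarith [hΔ y hy]
  · refine sub_nonpos.2 (le_trans ?_ (norm_sq_le_halfBallBarrier he hA hB
      (closure_halfBall_subset e r (frontier_subset_closure hy))))
    rcases norm_eq_or_inner_eq_zero_of_mem_frontier_halfBall hy with hnorm | hinner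
    · simpa [hnorm, hr.ne'] using hsphere y hnorm
    · exact (hflat y hinner).trans (by positivity)

end BarrierComparison

section GradientEstimate

variable {f : E → ℝ} {x₀ : E} {r M L : ℝ}

lemma sub_comp_reflection_le_halfBallBarrier {e x : E} (he : ‖e‖ = 1)
    (hf : ∀ x ∈ closedBall x₀ r, ContDiffAt ℝ 2 f x) (hM : ∀ x ∈ closedBall x₀ r, |f x| ≤ M)
    (hL : ∀ x ∈ closedBall x₀ r, |Δ f x| ≤ L) (hx : x ∈ halfBall e r) :
    f (x₀ + x) - f (x₀ + (ℝ ∙ e)ᗮ.reflection x) ≤ halfBallBarrier e r (2 * M) (2 * L) x := by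
  have hr : 0 < r := pos_of_mem_ball hx.1
  have hM₀ : 0 ≤ M := (abs_nonneg _).trans (hM x₀ (mem_closedBall_self hr.le))
  have hL₀ : 0 ≤ L := (abs_nonneg _).trans (hL x₀ (mem_closedBall_self hr.le))
  set R := (ℝ ∙ e)ᗮ.reflection
  have hadd {y : E} (hy : ‖y‖ ≤ r) : x₀ + y ∈ closedBall x₀ r := by simpa
  have haddR {y : E} (hy : ‖y‖ ≤ r) : x₀ + R y ∈ closedBall x₀ r := hadd (by simpa)
  have hball {y : E} (hy : y ∈ closure (halfBall e r)) : ‖y‖ ≤ r :=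
    mem_closedBall_zero_iff.1 (closure_halfBall_subset e r hy).1
  have hfadd {y : E} (hy : ‖y‖ ≤ r) : ContDiffAt ℝ 2 (fun y ↦ f (x₀ + y)) y :=
    (hf _ (hadd hy)).comp y (by fun_prop)
  have hfR {y : E} (hy : ‖y‖ ≤ r) : ContDiffAt ℝ 2 (fun y ↦ f (x₀ + R y)) y :=
    (hf _ (haddR hy)).comp y (contDiffAt_const.add R.contDiff.contDiffAt)
  refine le_halfBallBarrier (w := (fun y ↦ f (x₀ + y)) - fun y ↦ f (x₀ + R y)) he (by positivity)
    (by positivity)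
    (fun y hy ↦ ((hfadd (hball hy)).sub (hfR (hball hy))).continuousAt.continuousWithinAt)
    (fun y hy ↦ (hfadd (hball (subset_closure hy))).sub (hfR (hball (subset_closure hy))))
    (fun y hy ↦ ?_) (fun y hy ↦ ?_) (fun y hy ↦ ?_) hx
  · have hy := hball (subset_closure hy)
    rw [(hfadd hy).laplacian_sub (hfR hy),
      laplacian_comp_linearIsometryEquiv (fun y ↦ f (x₀ + y)) R,
      laplacian_comp_add_left, laplacian_comp_add_left]
    linarith [abs_le.1 (hL _ (hadd hy)), abs_le.1 (hL _ (haddR hy))]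
  · simp only [Pi.sub_apply]
    linarith [abs_le.1 (hM _ (hadd hy.le)), abs_le.1 (hM _ (haddR hy.le))]
  · have hfix : R y = y :=
      Submodule.reflection_mem_subspace_eq_self
        (Submodule.mem_orthogonal_singleton_iff_inner_right.2 hy)
    simp [hfix]

lemma fderiv_apply_le_of_abs_laplacian_le {e : E} (he : ‖e‖ = 1) (hr : 0 < r)
    (hf : ∀ x ∈ closedBall x₀ r, ContDiffAt ℝ 2 f x) (hM : ∀ x ∈ closedBall x₀ r, |f x| ≤ M)
    (hL : ∀ x ∈ closedBall x₀ r, |Δ f x| ≤ L) :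
    fderiv ℝ f x₀ e ≤ Module.finrank ℝ E * M / r + L * r / 2 := by
  set n : ℝ := (Module.finrank ℝ E : ℝ) with hn
  have hfx₀ : HasFDerivAt f (fderiv ℝ f x₀) x₀ :=
    ((hf x₀ (mem_closedBall_self hr.le)).differentiableAt two_ne_zero).hasFDerivAt
  have hderiv : HasDerivAt (fun t : ℝ ↦ f (x₀ + t • e) - f (x₀ + t • (-e)))
      (fderiv ℝ f x₀ e - fderiv ℝ f x₀ (-e)) 0 :=
    hfx₀.hasLineDerivAt e |>.sub (hfx₀.hasLineDerivAt (-e))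
  have hslope_le : ∀ t ∈ Ioo 0 r, t⁻¹ * (f (x₀ + t • e) - f (x₀ + t • (-e))) ≤
      2 * M / r ^ 2 * t + (n * (2 * M) / r ^ 2 + L) * (r - t) := by
    rintro t ⟨ht₀, htr⟩
    have hinner : ⟪e, t • e⟫ = t := by simp [inner_smul_right, he]
    have hnorm : ‖t • e‖ = t := by simp [norm_smul, he, ht₀.le]
    have h := sub_comp_reflection_le_halfBallBarrier he hf hM hL
      (x := t • e) ⟨by simpa [hnorm], by simpa [hinner]⟩
    rw [map_smul, Submodule.reflection_orthogonalComplement_singleton_eq_neg, halfBallBarrier,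
      hinner, hnorm, ← hn] at h
    rw [inv_mul_le_iff₀ ht₀]
    linear_combination h
  have hbound_tendsto : Tendsto
      (fun t : ℝ ↦ 2 * M / r ^ 2 * t + (n * (2 * M) / r ^ 2 + L) * (r - t)) (𝓝[>] 0)
      (𝓝 (2 * (n * M / r + L * r / 2))) := by
    have hcont : ContinuousAt
      (fun t : ℝ ↦ 2 * M / r ^ 2 * t + (n * (2 * M) / r ^ 2 + L) * (r - t)) 0 := by fun_prop
    convert hcont.tendsto.mono_left nhdsWithin_le_nhds using 2
    field_simp
    ring
  have htwice : fderiv ℝ f x₀ e - fderiv ℝ f x₀ (-e) ≤ 2 * (n * M / r + L * r / 2) := by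
    refine le_of_tendsto_of_tendsto hderiv.tendsto_slope_zero_right hbound_tendsto ?_
    filter_upwards [Ioo_mem_nhdsGT hr] with t ht using by simpa using hslope_le t ht
  rw [map_neg] at htwice
  linarith

theorem norm_fderiv_le_of_abs_laplacian_le (hr : 0 < r)
    (hf : ∀ x ∈ closedBall x₀ r, ContDiffAt ℝ 2 f x) (hM : ∀ x ∈ closedBall x₀ r, |f x| ≤ M)
    (hL : ∀ x ∈ closedBall x₀ r, |Δ f x| ≤ L) :
    ‖fderiv ℝ f x₀‖ ≤ Module.finrank ℝ E * M / r + L * r / 2 := by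
  have hM₀ : 0 ≤ M := (abs_nonneg _).trans (hM x₀ (mem_closedBall_self hr.le))
  have hL₀ : 0 ≤ L := (abs_nonneg _).trans (hL x₀ (mem_closedBall_self hr.le))
  refine ContinuousLinearMap.opNorm_le_of_unit_norm (by positivity) fun e he ↦ abs_le'.2 ⟨?_, ?_⟩
  · exact fderiv_apply_le_of_abs_laplacian_le he hr hf hM hL
  · simpa using fderiv_apply_le_of_abs_laplacian_le (e := -e) (by simpa) hr hf hM hL

theorem norm_fderiv_sub_le_of_abs_laplacian_le (hf : ContDiff ℝ 2 f) (hM : ∀ x, |f x| ≤ M)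
    (hL : ∀ x, |Δ f x| ≤ L) (a b : E) :
    ‖fderiv ℝ f a - fderiv ℝ f b‖ ≤
      (Module.finrank ℝ E * (Module.finrank ℝ E * M + L / 2) + L) * √‖a - b‖ := by
  set n : ℝ := (Module.finrank ℝ E : ℝ)
  rcases eq_or_ne a b with rfl | hab
  · simp
  have hh : 0 < ‖a - b‖ := norm_sub_pos_iff.2 hab
  have hf' : Differentiable ℝ f := hf.differentiable two_ne_zero
  have hfderiv_le (x : E) : ‖fderiv ℝ f x‖ ≤ n * M + L / 2 := by
    simpa using norm_fderiv_le_of_abs_laplacian_le (x₀ := x) one_pos (fun y _ ↦ hf.contDiffAt)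
      (fun y _ ↦ hM y) (fun y _ ↦ hL y)
  have hg : ContDiff ℝ 2 fun x ↦ f ((a - b) + x) := hf.comp (by fun_prop)
  have hg_sub_le (x : E) : |f ((a - b) + x) - f x| ≤ (n * M + L / 2) * ‖a - b‖ := by
    simpa using convex_univ.norm_image_sub_le_of_norm_fderiv_le (fun y _ ↦ hf' y)
      (fun y _ ↦ hfderiv_le y) (mem_univ x) (mem_univ ((a - b) + x))
  have hlaplacian_le (x : E) : |Δ ((fun x ↦ f ((a - b) + x)) - f) x| ≤ 2 * L := by
    rw [hg.contDiffAt.laplacian_sub hf.contDiffAt, laplacian_comp_add_left]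
    linarith [abs_sub (Δ f ((a - b) + x)) (Δ f x), hL ((a - b) + x), hL x]
  have hfderiv : fderiv ℝ ((fun x ↦ f ((a - b) + x)) - f) b = fderiv ℝ f a - fderiv ℝ f b := by
    rw [fderiv_sub (hg.differentiable two_ne_zero b) (hf' b), fderiv_comp_add_left, sub_add_cancel]
  calc ‖fderiv ℝ f a - fderiv ℝ f b‖
      ≤ n * ((n * M + L / 2) * ‖a - b‖) / √‖a - b‖ + 2 * L * √‖a - b‖ / 2 := by
        rw [← hfderiv]
        exact norm_fderiv_le_of_abs_laplacian_le (Real.sqrt_pos.2 hh)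
          (fun x _ ↦ (hg.sub hf).contDiffAt) (fun x _ ↦ hg_sub_le x) (fun x _ ↦ hlaplacian_le x)
    _ = n * (n * M + L / 2) * (‖a - b‖ / √‖a - b‖) + L * √‖a - b‖ := by ring
    _ = (n * (n * M + L / 2) + L) * √‖a - b‖ := by rw [Real.div_sqrt]; ring

theorem uniformContinuous_fderiv_of_abs_laplacian_le (hf : ContDiff ℝ 2 f) (hM : ∀ x, |f x| ≤ M)
    (hL : ∀ x, |Δ f x| ≤ L) : UniformContinuous (fderiv ℝ f) := by
  refine tendsto_uniformity_iff_dist_tendsto_zero.2 (squeeze_zero (fun _ ↦ dist_nonneg)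
    (fun p ↦ by
      simpa only [dist_eq_norm] using norm_fderiv_sub_le_of_abs_laplacian_le hf hM hL p.1 p.2) ?_)
  have hdist : Tendsto (fun p : E × E ↦ ‖p.1 - p.2‖) (𝓤 E) (𝓝 0) := by
    simpa only [dist_eq_norm, id] using
      tendsto_uniformity_iff_dist_tendsto_zero.1 (tendsto_id (α := E × E) (x := 𝓤 E))
  simpa using hdist.sqrt.const_mul _

end GradientEstimate

theorem stmt16_general {f : E → ℝ} (hf : ContDiff ℝ 2 f) {M L : ℝ} (hM : ∀ x, |f x| ≤ M)
    (hL : ∀ x, |Δ f x| ≤ L) :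
    UniformContinuous (fun x ↦ gradient f x) ∧
      ∀ x, ‖gradient f x‖ ≤ (Module.finrank ℝ E + 1) * (M + L) := by
  refine ⟨(toDual ℝ E).symm.isometry.uniformContinuous.comp ?_, fun x ↦ ?_⟩
  · exact uniformContinuous_fderiv_of_abs_laplacian_le hf hM hL
  · have hM₀ : 0 ≤ M := (abs_nonneg _).trans (hM x)
    have hL₀ : 0 ≤ L := (abs_nonneg _).trans (hL x)
    calc ‖gradient f x‖ = ‖fderiv ℝ f x‖ := (toDual ℝ E).symm.norm_map _
      _ ≤ Module.finrank ℝ E * M + L / 2 := by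
        simpa using norm_fderiv_le_of_abs_laplacian_le one_pos (fun y _ ↦ hf.contDiffAt)
          (fun y _ ↦ hM y) (fun y _ ↦ hL y)
      _ ≤ (Module.finrank ℝ E + 1) * (M + L) := by
        have : 0 ≤ (Module.finrank ℝ E : ℝ) * L := by positivity
        linarith

lemma lap_eq_laplacian (N : ℕ) (f : EuclideanSpace ℝ (Fin N) → ℝ) : lap N f = Δ f := by
  ext x
  simp [lap, laplacian_eq_iteratedFDeriv_orthonormalBasis f (EuclideanSpace.basisFun (Fin N) ℝ)]

/-- Lemma C.4.  There is a constant `C` depending only on `N` such that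
for every `C²` function `f : ℝ^N → ℝ` with `f` and `Δf` bounded and uniformly continuous,
`∇f` is bounded and uniformly continuous and
`‖∇f‖_{L^∞} ≤ C(‖f‖_{L^∞} + ‖Δf‖_{L^∞})`. -/
theorem stmt16 (N : ℕ) (hN : 1 ≤ N) :
    ∃ C : ℝ, ∀ f : EuclideanSpace ℝ (Fin N) → ℝ, ContDiff ℝ 2 f →
      UniformContinuous f → UniformContinuous (lap N f) →
      ∀ Cf CΔ : ℝ, (∀ x, |f x| ≤ Cf) → (∀ x, |lap N f x| ≤ CΔ) →
        UniformContinuous (fun x => gradient f x) ∧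
        ∀ x, ‖gradient f x‖ ≤ C * (Cf + CΔ) := by
  refine ⟨Module.finrank ℝ (EuclideanSpace ℝ (Fin N)) + 1, fun f hf _ _ Cf CΔ hCf hCΔ ↦ ?_⟩
  exact stmt16_general hf hCf (lap_eq_laplacian N f ▸ hCΔ)
end
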